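/- Let n ∈ ℕ with n ≥ 3. For every β with n/3 < β < n/2 and every u with 0 < u < 1, ∫₀^∞ e^{−ut} t^{n/2−β} J_{n/2−1}(t) dt ≥ (1/2)^{n/2−1} Γ(n−β) / ( 2^{(n−β)/2} Γ(n/2) ), and this lower bound is strictly positive. -/

import Mathlib

/-!
Write `J_ν(t) = (t / 2) ^ ν * φ_ν(t ^ 2 / 4)` with `φ_ν` entire (`besselFactor`), and put
`ν = n / 2 - 1`, `a = n - β`, `b = (β - 1) / 2`. The hypothesis `β > n / 3 ≥ 1` gives `b > 0`, and
`ν = (a - 1) / 2 + b`, so Sonine's integral (`sonine`) expresses `φ_ν` through `φ_{(a - 1) / 2}`: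
`Γ(b) φ_ν(x) = ∫₀¹ s ^ ((a - 1) / 2) (1 - s) ^ (b - 1) φ_{(a - 1) / 2}(s x) ds`.

The order `(a - 1) / 2` is the one for which the Laplace transform is elementary
(`laplace_besselFactor`):
`∫₀^∞ t ^ (a - 1) e ^ (-u t) φ_{(a - 1) / 2}(s t ^ 2 / 4) dt`
`  = 2 ^ (a - 1) Γ(a / 2) / √π * (u ^ 2 + s) ^ (-a / 2)`.
For `s < u ^ 2` this is termwise integration; the general case follows by analytic continuation in
`u`. The bound on `φ` needed for holomorphy, integrability and Fubini is the Poisson integral, i.e.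
Sonine's integral starting from `φ_{-1/2}(x) = cos (2 √x) / √π`.

By Fubini the integral in question is a positive constant times
`∫₀¹ s ^ ((a - 1) / 2) (1 - s) ^ (b - 1) (u ^ 2 + s) ^ (-a / 2) ds`. Since `u ^ 2 + s < 2`, the last
factor is at least `2 ^ (-a / 2)`, and the remaining Beta integral together with the duplication
formula gives exactly the claimed constant.
-/

/-- The Bessel function of the first kind of order `ν`, defined for `t ≥ 0` by its
power series `J_ν(t) = ∑_{l=0}^∞ (−1)^l (t/2)^{ν+2l} / (l! Γ(l+ν+1))`. -/
noncomputable def besselJ (ν t : ℝ) : ℝ :=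
  ∑' l : ℕ, ((-1 : ℝ) ^ l * (t / 2) ^ (ν + 2 * l)) / (l.factorial * Real.Gamma (l + ν + 1))

open MeasureTheory

/-! ### Beta integrals and the Bessel factor -/

lemma beta_aux {p q : ℝ} {s : ℝ} (hs : s ∈ Set.Ioo (0 : ℝ) 1) :
    ((s : ℂ) ^ ((p : ℂ) - 1) * (1 - (s : ℂ)) ^ ((q : ℂ) - 1)) =
      ((s ^ (p - 1) * (1 - s) ^ (q - 1) : ℝ) : ℂ) := by
  have h1 : (0 : ℝ) ≤ s := hs.1.le
  have h2 : (0 : ℝ) ≤ 1 - s := by linarith [hs.2]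
  push_cast
  rw [Complex.ofReal_cpow h1, Complex.ofReal_cpow h2]
  push_cast
  rfl

lemma beta_integrableOn {p q : ℝ} (hp : 0 < p) (hq : 0 < q) :
    IntegrableOn (fun s : ℝ => s ^ (p - 1) * (1 - s) ^ (q - 1)) (Set.Ioo 0 1) := by
  have h := Complex.betaIntegral_convergent (u := p) (v := q) (by simpa) (by simpa)
  rw [intervalIntegrable_iff_integrableOn_Ioo_of_le zero_le_one] at h
  refine (MeasureTheory.Integrable.re h).congr ?_
  filter_upwards [ae_restrict_mem measurableSet_Ioo] with s hs
  rw [beta_aux hs]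
  simp

lemma beta_integral {p q : ℝ} (hp : 0 < p) (hq : 0 < q) :
    ∫ s in Set.Ioo (0 : ℝ) 1, s ^ (p - 1) * (1 - s) ^ (q - 1) =
      Real.Gamma p * Real.Gamma q / Real.Gamma (p + q) := by
  have h := ProbabilityTheory.beta_eq_betaIntegralReal p q hp hq
  rw [ProbabilityTheory.beta] at h
  rw [h, Complex.betaIntegral, intervalIntegral.integral_of_le zero_le_one,
    integral_Ioc_eq_integral_Ioo,
    setIntegral_congr_fun measurableSet_Ioo (fun s hs => beta_aux hs)]
  exact (congrArg Complex.re (integral_ofReal (𝕜 := ℂ))).symm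

/-- The even entire factor of the Bessel function, in the variable `x = t² / 4`:
`J_ν(t) = (t / 2) ^ ν * besselFactor ν (t ^ 2 / 4)`. -/
noncomputable def besselFactor (ν x : ℝ) : ℝ :=
  ∑' l : ℕ, (-x) ^ l / (l.factorial * Real.Gamma (l + ν + 1))

lemma Gamma_shift_pos {ν : ℝ} (hν : -1 < ν) (l : ℕ) : 0 < Real.Gamma (l + ν + 1) := by
  apply Real.Gamma_pos_of_pos
  have : (0 : ℝ) ≤ l := l.cast_nonneg
  linarith

lemma summable_besselFactor {ν : ℝ} (hν : -1 < ν) (x : ℝ) :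
    Summable fun l : ℕ => x ^ l / (l.factorial * Real.Gamma (l + ν + 1)) := by
  by_cases hx : x = 0
  · subst hx
    refine summable_of_ne_finset_zero (s := {0}) fun l hl => ?_
    have : l ≠ 0 := by simpa using hl
    simp [this]
  refine summable_of_ratio_test_tendsto_lt_one (l := 0) zero_lt_one ?_ ?_
  · refine Filter.Eventually.of_forall fun l => ?_
    have := Gamma_shift_pos hν l
    positivity
  · have h1 : Filter.Tendsto (fun l : ℕ => |x| / ((l : ℝ) + 1)) Filter.atTop (nhds 0) :=
      Filter.Tendsto.div_atTop tendsto_const_nhds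
        (Filter.tendsto_atTop_add_const_right _ _ tendsto_natCast_atTop_atTop)
    have h2 : Filter.Tendsto (fun l : ℕ => 1 / ((l : ℝ) + (ν + 1))) Filter.atTop (nhds 0) :=
      Filter.Tendsto.div_atTop tendsto_const_nhds
        (Filter.tendsto_atTop_add_const_right _ _ tendsto_natCast_atTop_atTop)
    have h3 := h1.mul h2
    rw [mul_zero] at h3
    refine h3.congr fun l => ?_
    have hl : (0 : ℝ) ≤ l := l.cast_nonneg
    have hG := Gamma_shift_pos hν l
    have hpos : 0 < (l : ℝ) + ν + 1 := by linarith
    have hstep : Real.Gamma (((l + 1 : ℕ) : ℝ) + ν + 1) =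
        ((l : ℝ) + ν + 1) * Real.Gamma (l + ν + 1) := by
      rw [← Real.Gamma_add_one hpos.ne']
      push_cast
      ring_nf
    have hx' : |x| ≠ 0 := by simpa using hx
    rw [hstep, Nat.factorial_succ]
    simp only [norm_div, norm_mul, norm_pow, Real.norm_eq_abs, Nat.abs_cast, Nat.cast_mul,
      abs_of_pos hG, abs_of_pos hpos]
    rw [← add_assoc]
    push_cast
    field_simp
    ring

lemma measurable_besselFactor {ν : ℝ} (hν : -1 < ν) : Measurable (besselFactor ν) := by
  refine measurable_of_tendsto_metrizable
    (f := fun (N : ℕ) x => ∑ l ∈ Finset.range N, (-x) ^ l / (l.factorial * Real.Gamma (l + ν + 1)))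
    (fun N => by fun_prop) ?_
  rw [tendsto_pi_nhds]
  intro x
  exact (summable_besselFactor hν (-x)).hasSum.tendsto_sum_nat

lemma besselJ_eq {ν t : ℝ} (ht : 0 < t) :
    besselJ ν t = (t / 2) ^ ν * besselFactor ν (t ^ 2 / 4) := by
  rw [besselJ, besselFactor, ← tsum_mul_left]
  refine tsum_congr fun l => ?_
  have h : (t / 2) ^ (ν + 2 * l) = (t / 2) ^ ν * (t ^ 2 / 4) ^ l := by
    rw [Real.rpow_add (by positivity), show (2 : ℝ) * l = ((2 * l : ℕ) : ℝ) by push_cast; ring,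
      Real.rpow_natCast, pow_mul]
    ring_nf
  rw [h, neg_pow (t ^ 2 / 4)]
  ring

/-- Sonine's integral, which raises the order of the Bessel factor by `b`. Term by term it is the
Beta integral `∫ s ^ (l + ν) (1 - s) ^ (b - 1) ds = Γ(l + ν + 1) Γ(b) / Γ(l + ν + b + 1)`. -/
lemma sonine {ν b x : ℝ} (hν : -1 < ν) (hb : 0 < b) :
    ∫ s in Set.Ioo (0 : ℝ) 1, s ^ ν * (1 - s) ^ (b - 1) * besselFactor ν (s * x) =
      Real.Gamma b * besselFactor (ν + b) x := by
  have key : ∀ (y : ℝ) (l : ℕ), ∀ s ∈ Set.Ioo (0 : ℝ) 1,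
      s ^ ν * (1 - s) ^ (b - 1) * ((s * y) ^ l / (l.factorial * Real.Gamma (l + ν + 1))) =
      y ^ l / (l.factorial * Real.Gamma (l + ν + 1)) *
        (s ^ ((l + ν + 1) - 1) * (1 - s) ^ (b - 1)) := by
    intro y l s hs
    rw [show (l : ℝ) + ν + 1 - 1 = ν + l by ring, Real.rpow_add hs.1, Real.rpow_natCast]
    ring
  have hp : ∀ l : ℕ, (0 : ℝ) < l + ν + 1 := fun l => by
    have : (0 : ℝ) ≤ l := l.cast_nonneg
    linarith
  have hint : ∀ (y : ℝ) (l : ℕ), IntegrableOn (fun s : ℝ =>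
      s ^ ν * (1 - s) ^ (b - 1) * ((s * y) ^ l / (l.factorial * Real.Gamma (l + ν + 1))))
      (Set.Ioo 0 1) := fun y l =>
    (((beta_integrableOn (hp l) hb).const_mul _).congr
      ((ae_restrict_mem measurableSet_Ioo).mono fun s hs => (key y l s hs).symm))
  have hval : ∀ (y : ℝ) (l : ℕ), ∫ s in Set.Ioo (0 : ℝ) 1,
      s ^ ν * (1 - s) ^ (b - 1) * ((s * y) ^ l / (l.factorial * Real.Gamma (l + ν + 1))) =
      Real.Gamma b * (y ^ l / (l.factorial * Real.Gamma (l + (ν + b) + 1))) := by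
    intro y l
    rw [setIntegral_congr_fun measurableSet_Ioo (key y l), integral_const_mul,
      beta_integral (hp l) hb, show (l : ℝ) + ν + 1 + b = l + (ν + b) + 1 by ring]
    have := (Gamma_shift_pos hν l).ne'
    field_simp
  have hsum := hasSum_integral_of_summable_integral_norm (hint (-x)) (by
    have hs := (summable_besselFactor (by linarith : -1 < ν + b) |x|).mul_left (Real.Gamma b)
    refine hs.congr fun l => ?_
    rw [← hval]
    refine setIntegral_congr_fun measurableSet_Ioo fun s hs => ?_
    have h1 : 0 ≤ s ^ ν := Real.rpow_nonneg hs.1.le _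
    have h2 : 0 ≤ (1 - s) ^ (b - 1) := Real.rpow_nonneg (by linarith [hs.2]) _
    simp [abs_of_nonneg h1, abs_of_nonneg h2, abs_of_pos (Gamma_shift_pos hν l), abs_of_pos hs.1])
  simp only [hval] at hsum
  rw [besselFactor, ← tsum_mul_left, hsum.tsum_eq]
  refine setIntegral_congr_fun measurableSet_Ioo fun s hs => ?_
  simp only [besselFactor]
  rw [← tsum_mul_left]
  simp

lemma besselFactor_neg_half {x : ℝ} (hx : 0 ≤ x) :
    besselFactor (-1 / 2) x = Real.cos (2 * √x) / √Real.pi := by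
  rw [besselFactor, Real.cos_eq_tsum, ← tsum_div_const]
  refine tsum_congr fun l => ?_
  have hd := Real.Gamma_mul_Gamma_add_half ((l : ℝ) + 1 / 2)
  rw [show (l : ℝ) + 1 / 2 + 1 / 2 = l + 1 by ring, Real.Gamma_nat_eq_factorial,
    show 2 * ((l : ℝ) + 1 / 2) = ((2 * l : ℕ) : ℝ) + 1 by push_cast; ring,
    Real.Gamma_nat_eq_factorial,
    show (1 : ℝ) - (((2 * l : ℕ) : ℝ) + 1) = -((2 * l : ℕ) : ℝ) by ring,
    Real.rpow_neg (by norm_num), Real.rpow_natCast] at hd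
  rw [show (l : ℝ) + -1 / 2 + 1 = l + 1 / 2 by ring, mul_comm, ← div_div, mul_comm]
  rw [div_div, hd, pow_mul (2 * √x), mul_pow, Real.sq_sqrt hx, neg_pow x, mul_pow, pow_mul]
  have : √Real.pi ≠ 0 := by positivity
  field_simp

/-- Boundedness on the half-line, from the Poisson integral: this is `sonine` started at order
`-1/2`, where the Bessel factor is a cosine. -/
lemma besselFactor_bounded {ν : ℝ} (hν : -1 / 2 < ν) :
    ∃ M : ℝ, ∀ x : ℝ, 0 ≤ x → |besselFactor ν x| ≤ M := by
  have hb : 0 < ν + 1 / 2 := by linarith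
  have hG := Real.Gamma_pos_of_pos hb
  refine ⟨(∫ s in Set.Ioo (0 : ℝ) 1, s ^ (1 / 2 - 1 : ℝ) * (1 - s) ^ (ν + 1 / 2 - 1) *
    (1 / √Real.pi)) / Real.Gamma (ν + 1 / 2), fun x hx => ?_⟩
  have h := sonine (ν := -1 / 2) (b := ν + 1 / 2) (x := x) (by norm_num) hb
  rw [show -1 / 2 + (ν + 1 / 2) = ν by ring] at h
  rw [le_div_iff₀ hG, mul_comm]
  nth_rw 1 [← abs_of_pos hG]
  rw [← abs_mul, ← h, ← Real.norm_eq_abs]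
  refine norm_integral_le_of_norm_le
    ((beta_integrableOn (by norm_num : (0 : ℝ) < 1 / 2) hb).mul_const _) ?_
  filter_upwards [ae_restrict_mem measurableSet_Ioo] with s hs
  have h1 : 0 ≤ s ^ (-1 / 2 : ℝ) := Real.rpow_nonneg hs.1.le _
  have h2 : 0 ≤ (1 - s) ^ (ν + 1 / 2 - 1) := Real.rpow_nonneg (by linarith [hs.2]) _
  rw [besselFactor_neg_half (mul_nonneg hs.1.le hx), Real.norm_eq_abs, abs_mul, abs_mul,
    abs_of_nonneg h1, abs_of_nonneg h2, show (1 / 2 - 1 : ℝ) = -1 / 2 by norm_num, abs_div,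
    abs_of_nonneg (Real.sqrt_nonneg _)]
  gcongr
  exact Real.abs_cos_le_one _

/-! ### Laplace transform of the critical Bessel function -/

lemma gamma_integrableOn {a r : ℝ} (ha : 0 < a) (hr : 0 < r) :
    IntegrableOn (fun t : ℝ => t ^ (a - 1) * Real.exp (-(r * t))) (Set.Ioi 0) := by
  have h := integrableOn_rpow_mul_exp_neg_mul_rpow (p := 1) (s := a - 1) (b := r)
    (by linarith) one_pos hr
  simpa using h

lemma summable_Gamma_binomial {α q : ℝ} (hα : 0 < α) (hq0 : 0 ≤ q) (hq1 : q < 1) :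
    Summable fun l : ℕ => Real.Gamma (α + l) / l.factorial * q ^ l := by
  rcases hq0.eq_or_lt with rfl | hq0
  · refine summable_of_ne_finset_zero (s := {0}) fun l hl => ?_
    have : l ≠ 0 := by simpa using hl
    simp [this]
  have hG : ∀ l : ℕ, 0 < Real.Gamma (α + l) := fun l => Real.Gamma_pos_of_pos (by positivity)
  refine summable_of_ratio_test_tendsto_lt_one (l := q) hq1 ?_ ?_
  · refine Filter.Eventually.of_forall fun l => ?_
    have := hG l
    positivity
  · have h1 : Filter.Tendsto (fun l : ℕ => (α - 1) / ((l : ℝ) + 1)) Filter.atTop (nhds 0) :=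
      Filter.Tendsto.div_atTop tendsto_const_nhds
        (Filter.tendsto_atTop_add_const_right _ _ tendsto_natCast_atTop_atTop)
    have h3 := (h1.const_add 1).mul_const q
    rw [add_zero, one_mul] at h3
    refine h3.congr fun l => ?_
    have hstep : Real.Gamma (α + ((l + 1 : ℕ) : ℝ)) = (α + l) * Real.Gamma (α + l) := by
      rw [← Real.Gamma_add_one (by positivity)]
      push_cast
      ring_nf
    have := hG l
    rw [hstep, Nat.factorial_succ, Real.norm_of_nonneg (by positivity),
      Real.norm_of_nonneg (by positivity)]
    push_cast
    field_simp
    ring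

/-- The binomial series of `(w + s) ^ (-α)`, scaled by `Γ(α)`. It comes from expanding
`exp (-s r)` under the integral `∫ r ^ (α - 1) exp (-(w + s) r) dr`. -/
lemma hasSum_Gamma_binomial {α s w : ℝ} (hα : 0 < α) (hs : 0 ≤ s) (hsw : s < w) :
    HasSum (fun l : ℕ => (-s) ^ l / l.factorial * ((1 / w) ^ (α + l) * Real.Gamma (α + l)))
      ((1 / (w + s)) ^ α * Real.Gamma α) := by
  have hw : 0 < w := hs.trans_lt hsw
  have hαl : ∀ l : ℕ, 0 < α + l := fun l => by positivity
  have key : ∀ (y : ℝ) (l : ℕ), ∀ r ∈ Set.Ioi (0 : ℝ),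
      r ^ (α - 1) * Real.exp (-(w * r)) * ((y * r) ^ l / l.factorial) =
      y ^ l / l.factorial * (r ^ ((α + l) - 1) * Real.exp (-(w * r))) := by
    intro y l r hr
    rw [show α + (l : ℝ) - 1 = α - 1 + l by ring, Real.rpow_add hr, Real.rpow_natCast]
    ring
  have hint : ∀ (y : ℝ) (l : ℕ), IntegrableOn (fun r : ℝ =>
      r ^ (α - 1) * Real.exp (-(w * r)) * ((y * r) ^ l / l.factorial)) (Set.Ioi 0) := fun y l =>
    (((gamma_integrableOn (hαl l) hw).const_mul _).congr
      ((ae_restrict_mem measurableSet_Ioi).mono fun s hs => (key y l s hs).symm))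
  have hval : ∀ (y : ℝ) (l : ℕ), ∫ r in Set.Ioi (0 : ℝ),
      r ^ (α - 1) * Real.exp (-(w * r)) * ((y * r) ^ l / l.factorial) =
      y ^ l / l.factorial * ((1 / w) ^ (α + l) * Real.Gamma (α + l)) := by
    intro y l
    rw [setIntegral_congr_fun measurableSet_Ioi (key y l), integral_const_mul,
      Real.integral_rpow_mul_exp_neg_mul_Ioi (hαl l) hw]
  have hsum := hasSum_integral_of_summable_integral_norm (hint (-s)) (by
    have hq := (summable_Gamma_binomial hα (div_nonneg hs hw.le)
      ((div_lt_one hw).2 hsw)).mul_left ((1 / w) ^ α)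
    refine hq.congr fun l => ?_
    have h1 := hval s l
    rw [Real.rpow_add (by positivity), Real.rpow_natCast] at h1
    transitivity s ^ l / l.factorial * ((1 / w) ^ α * (1 / w) ^ l * Real.Gamma (α + l))
    · rw [div_pow, div_pow, one_pow]
      ring
    rw [← h1]
    refine setIntegral_congr_fun measurableSet_Ioi fun r hr => ?_
    have hr' : 0 < r := hr
    have h1 : 0 ≤ r ^ (α - 1) := Real.rpow_nonneg hr'.le _
    simp [abs_of_nonneg h1, abs_of_nonneg hs, abs_of_pos hr'])
  simp only [hval] at hsum
  suffices h : (1 / (w + s)) ^ α * Real.Gamma α = ∫ r in Set.Ioi (0 : ℝ),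
      ∑' l : ℕ, r ^ (α - 1) * Real.exp (-(w * r)) * ((-s * r) ^ l / l.factorial) by
    rw [h]
    exact hsum
  rw [← Real.integral_rpow_mul_exp_neg_mul_Ioi hα (by positivity)]
  refine setIntegral_congr_fun measurableSet_Ioi fun r hr => ?_
  have hexp : ∑' l : ℕ, (-s * r) ^ l / l.factorial = Real.exp (-s * r) := by
    rw [Real.exp_eq_exp_ℝ, NormedSpace.exp_eq_tsum_div]
  rw [tsum_mul_left, hexp, mul_assoc, ← Real.exp_add]
  ring_nf

/-- Legendre's duplication formula, solved for `Γ(a)`. -/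
lemma Gamma_duplication (a : ℝ) :
    2 ^ (a - 1) / √Real.pi * (Real.Gamma (a / 2) * Real.Gamma ((a + 1) / 2)) = Real.Gamma a := by
  have h := Real.Gamma_mul_Gamma_add_half (a / 2)
  rw [show a / 2 + 1 / 2 = (a + 1) / 2 by ring, mul_div_cancel₀ _ (two_ne_zero' ℝ)] at h
  rw [h, show 1 - a = -(a - 1) by ring, Real.rpow_neg (by norm_num)]
  have : √Real.pi ≠ 0 := by positivity
  have : (2 : ℝ) ^ (a - 1) ≠ 0 := by positivity
  field_simp

/-- The Laplace transform of `t ^ (a - 1)` times the Bessel factor of order `(a - 1) / 2`, in the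
region `s < u ^ 2` where the series can be integrated term by term. For this order the
duplication formula cancels one Gamma factor and leaves the binomial series. -/
lemma laplace_besselFactor_of_lt {a s u : ℝ} (ha : 0 < a) (hs : 0 ≤ s) (hu : 0 < u)
    (hsu : s < u ^ 2) :
    ∫ t in Set.Ioi (0 : ℝ), t ^ (a - 1) * Real.exp (-(u * t)) *
        besselFactor ((a - 1) / 2) (s * (t ^ 2 / 4)) =
      2 ^ (a - 1) / √Real.pi * ((1 / (u ^ 2 + s)) ^ (a / 2) * Real.Gamma (a / 2)) := by
  have hal : ∀ l : ℕ, 0 < a + 2 * l := fun l => by positivity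
  have hGl := Gamma_shift_pos (show -1 < (a - 1) / 2 by linarith)
  have key : ∀ (y : ℝ) (l : ℕ), ∀ t ∈ Set.Ioi (0 : ℝ),
      t ^ (a - 1) * Real.exp (-(u * t)) *
        ((y * (t ^ 2 / 4)) ^ l / (l.factorial * Real.Gamma (l + (a - 1) / 2 + 1))) =
      (y / 4) ^ l / (l.factorial * Real.Gamma (l + (a - 1) / 2 + 1)) *
        (t ^ ((a + 2 * l) - 1) * Real.exp (-(u * t))) := by
    intro y l t ht
    rw [show a + 2 * (l : ℝ) - 1 = a - 1 + ((2 * l : ℕ) : ℝ) by push_cast; ring,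
      Real.rpow_add ht, Real.rpow_natCast, pow_mul, mul_pow, div_pow, div_pow]
    ring
  have hint : ∀ (y : ℝ) (l : ℕ), IntegrableOn (fun t : ℝ => t ^ (a - 1) * Real.exp (-(u * t)) *
        ((y * (t ^ 2 / 4)) ^ l / (l.factorial * Real.Gamma (l + (a - 1) / 2 + 1))))
      (Set.Ioi 0) := fun y l =>
    (((gamma_integrableOn (hal l) hu).const_mul _).congr
      ((ae_restrict_mem measurableSet_Ioi).mono fun s hs => (key y l s hs).symm))
  have hval : ∀ (y : ℝ) (l : ℕ), ∫ t in Set.Ioi (0 : ℝ), t ^ (a - 1) * Real.exp (-(u * t)) *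
        ((y * (t ^ 2 / 4)) ^ l / (l.factorial * Real.Gamma (l + (a - 1) / 2 + 1))) =
      2 ^ (a - 1) / √Real.pi *
        (y ^ l / l.factorial * ((1 / u ^ 2) ^ (a / 2 + l) * Real.Gamma (a / 2 + l))) := by
    intro y l
    rw [setIntegral_congr_fun measurableSet_Ioi (key y l), integral_const_mul,
      Real.integral_rpow_mul_exp_neg_mul_Ioi (hal l) hu, ← Gamma_duplication (a + 2 * l),
      show (a + 2 * (l : ℝ)) / 2 = a / 2 + l by ring,
      show (a + 2 * (l : ℝ) + 1) / 2 = l + (a - 1) / 2 + 1 by ring,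
      show a + 2 * (l : ℝ) - 1 = a - 1 + ((2 * l : ℕ) : ℝ) by push_cast; ring,
      Real.rpow_add (two_pos : (0 : ℝ) < 2), Real.rpow_natCast, pow_mul, div_pow y,
      show (1 / u ^ 2) = (1 / u) ^ (2 : ℝ) by simp, ← Real.rpow_mul (by positivity),
      show 2 * (a / 2 + (l : ℝ)) = a + 2 * l by ring]
    have h1 := (hGl l).ne'
    have : √Real.pi ≠ 0 := by positivity
    norm_num only
    generalize Real.Gamma (l + (a - 1) / 2 + 1) = γ at h1 ⊢
    field_simp
  have hsum := hasSum_integral_of_summable_integral_norm (hint (-s)) (by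
    have hq := (hasSum_Gamma_binomial (half_pos ha) hs hsu).summable.norm.mul_left
      (2 ^ (a - 1) / √Real.pi)
    refine hq.congr fun l => ?_
    have hG : 0 < Real.Gamma (a / 2 + l) := Real.Gamma_pos_of_pos (by positivity)
    have h1 := hval s l
    have h2 : 0 ≤ (1 / u ^ 2) ^ (a / 2 + l) := by positivity
    rw [norm_mul, norm_div, norm_pow, norm_neg, Real.norm_of_nonneg hs, RCLike.norm_natCast,
      Real.norm_of_nonneg (mul_nonneg h2 hG.le), ← h1]
    refine setIntegral_congr_fun measurableSet_Ioi fun r hr => ?_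
    have hr' : 0 < r := hr
    have h1 : 0 ≤ r ^ (a - 1) := Real.rpow_nonneg hr'.le _
    simp [abs_of_nonneg h1, abs_of_nonneg hs, abs_of_pos hr', abs_of_pos (hGl l)])
  simp only [hval] at hsum
  have h2 := (hasSum_Gamma_binomial (half_pos ha) hs hsu).mul_left (2 ^ (a - 1) / √Real.pi)
  rw [← hsum.unique h2]
  refine setIntegral_congr_fun measurableSet_Ioi fun t ht => ?_
  simp only [besselFactor]
  rw [← tsum_mul_left]
  simp

lemma laplace_differentiableOn {a M : ℝ} {g : ℝ → ℝ} (ha : 0 < a) (hg : Measurable g)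
    (hM : ∀ t, |g t| ≤ M) :
    DifferentiableOn ℂ (fun z : ℂ => ∫ t in Set.Ioi (0 : ℝ),
      ((t ^ (a - 1) * g t : ℝ) : ℂ) * Complex.exp (-(z * t))) {z : ℂ | 0 < z.re} := by
  intro z₀ hz₀
  have hz : 0 < z₀.re := hz₀
  set ε := z₀.re / 2 with hε
  have hε0 : 0 < ε := by positivity
  have hmeas : Measurable fun t : ℝ => ((t ^ (a - 1) * g t : ℝ) : ℂ) := by fun_prop
  have hnorm : ∀ (z : ℂ) (t : ℝ), 0 < t → ε ≤ z.re →
      ‖((t ^ (a - 1) * g t : ℝ) : ℂ) * Complex.exp (-(z * t))‖ ≤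
        M * (t ^ (a - 1) * Real.exp (-(ε * t))) := by
    intro z t ht hzε
    have h1 : 0 ≤ t ^ (a - 1) := Real.rpow_nonneg ht.le _
    rw [norm_mul, Complex.norm_real, Complex.norm_exp, Real.norm_eq_abs, abs_mul,
      abs_of_nonneg h1]
    have h3 : Real.exp (-(z * t)).re ≤ Real.exp (-(ε * t)) := by
      apply Real.exp_le_exp.2
      simp only [Complex.neg_re, Complex.mul_re, Complex.ofReal_re, Complex.ofReal_im]
      nlinarith
    have hM0 : 0 ≤ M := (abs_nonneg _).trans (hM t)
    calc t ^ (a - 1) * |g t| * Real.exp (-(z * t)).re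
        ≤ t ^ (a - 1) * M * Real.exp (-(ε * t)) := by
          gcongr
          exact hM t
      _ = _ := by ring
  refine DifferentiableAt.differentiableWithinAt ?_
  refine (hasDerivAt_integral_of_dominated_loc_of_deriv_le
    (F' := fun z t => ((t ^ (a - 1) * g t : ℝ) : ℂ) * Complex.exp (-(z * t)) * (-(t : ℂ)))
    (bound := fun t => M * (t ^ ((a + 1) - 1) * Real.exp (-(ε * t))))
    (s := {z : ℂ | ε < z.re}) ?_ ?_ ?_ ?_ ?_ ?_ ?_).2.differentiableAt
  · exact (isOpen_lt continuous_const Complex.continuous_re).mem_nhds (by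
      show ε < z₀.re
      linarith)
  · exact Filter.Eventually.of_forall fun z => by fun_prop
  · refine Integrable.mono' ((gamma_integrableOn ha hε0).const_mul M) (by fun_prop) ?_
    filter_upwards [ae_restrict_mem measurableSet_Ioi] with t ht
    exact hnorm z₀ t ht (by linarith)
  · fun_prop
  · filter_upwards [ae_restrict_mem measurableSet_Ioi] with t ht z hzε
    have ht' : 0 < t := ht
    rw [norm_mul, norm_neg, Complex.norm_real, Real.norm_of_nonneg ht'.le,
      show a + 1 - 1 = a - 1 + 1 by ring, Real.rpow_add_one ht'.ne']
    calc _ ≤ M * (t ^ (a - 1) * Real.exp (-(ε * t))) * t := by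
          gcongr
          exact hnorm z t ht (le_of_lt hzε)
      _ = _ := by ring
  · exact (gamma_integrableOn (by linarith) hε0).const_mul M
  · refine Filter.Eventually.of_forall fun t z _ => ?_
    have h1 : HasDerivAt (fun z : ℂ => -(z * t)) (-(t : ℂ)) z := by
      simpa using! ((hasDerivAt_id z).mul_const (t : ℂ)).neg
    simpa [mul_assoc] using h1.cexp.const_mul ((t ^ (a - 1) * g t : ℝ) : ℂ)

/-- `laplace_besselFactor_of_lt` without the restriction `s < u ^ 2`: both sides extend
holomorphically to the half-plane `Re z > 0`, so the identity theorem applies. -/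
lemma laplace_besselFactor {a s u : ℝ} (ha : 0 < a) (hs : 0 ≤ s) (hu : 0 < u) :
    ∫ t in Set.Ioi (0 : ℝ), t ^ (a - 1) * Real.exp (-(u * t)) *
        besselFactor ((a - 1) / 2) (s * (t ^ 2 / 4)) =
      2 ^ (a - 1) / √Real.pi * ((1 / (u ^ 2 + s)) ^ (a / 2) * Real.Gamma (a / 2)) := by
  set g : ℝ → ℝ := fun t => besselFactor ((a - 1) / 2) (s * (t ^ 2 / 4)) with hg
  set C : ℝ := 2 ^ (a - 1) / √Real.pi * Real.Gamma (a / 2) with hC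
  have hgm : Measurable g :=
    (measurable_besselFactor (by linarith)).comp (by fun_prop)
  obtain ⟨M, hM⟩ := besselFactor_bounded (ν := (a - 1) / 2) (by linarith)
  have hF := laplace_differentiableOn ha hgm (M := M) fun t => hM _ (by positivity)
  set F : ℂ → ℂ := fun z => ∫ t in Set.Ioi (0 : ℝ),
      ((t ^ (a - 1) * g t : ℝ) : ℂ) * Complex.exp (-(z * t)) with hFdef
  set G : ℂ → ℂ := fun z => (C : ℂ) * (z ^ 2 + s) ^ (-(a / 2) : ℂ) with hGdef
  have hG : DifferentiableOn ℂ G {z : ℂ | 0 < z.re} := by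
    intro z hz
    have hz' : 0 < z.re := hz
    refine DifferentiableAt.differentiableWithinAt ?_
    refine DifferentiableAt.const_mul ?_ _
    refine DifferentiableAt.cpow (by fun_prop) (by fun_prop) ?_
    rw [Complex.mem_slitPlane_iff]
    by_cases him : z.im = 0
    · left
      simp [pow_two, him]
      positivity
    · right
      simp [pow_two]
      intro h
      rcases mul_eq_zero.1 (show z.re * z.im = 0 by linarith) with h | h
      · exact hz'.ne' h
      · exact him h
  have hopen : IsOpen {z : ℂ | 0 < z.re} := isOpen_lt continuous_const Complex.continuous_re
  have hFu : ∀ v : ℝ, F v = ((∫ t in Set.Ioi (0 : ℝ), t ^ (a - 1) * Real.exp (-(v * t)) *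
        g t : ℝ) : ℂ) := by
    intro v
    rw [hFdef]
    refine Eq.trans ?_ (integral_ofReal (𝕜 := ℂ))
    refine setIntegral_congr_fun measurableSet_Ioi fun t _ => ?_
    simp only [Complex.coe_algebraMap]
    push_cast
    ring
  have hGu : ∀ v : ℝ, 0 < v → G v = ((2 ^ (a - 1) / √Real.pi *
      ((1 / (v ^ 2 + s)) ^ (a / 2) * Real.Gamma (a / 2)) : ℝ) : ℂ) := by
    intro v hv
    have h : 0 ≤ v ^ 2 + s := by positivity
    rw [one_div, Real.inv_rpow h, ← Real.rpow_neg h, hGdef, hC]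
    push_cast
    rw [Complex.ofReal_cpow h]
    push_cast
    ring
  -- The two sides agree at the real points near `s + 1`, since `(s + 1) ^ 2 > s`.
  have hfreq : ∃ᶠ z in nhdsWithin (((s + 1 : ℝ)) : ℂ) {((s + 1 : ℝ) : ℂ)}ᶜ, F z = G z := by
    have htend : Filter.Tendsto (fun v : ℝ => (v : ℂ)) (nhdsWithin (s + 1) {s + 1}ᶜ)
        (nhdsWithin (((s + 1 : ℝ)) : ℂ) {((s + 1 : ℝ) : ℂ)}ᶜ) := by
      refine tendsto_nhdsWithin_iff.2 ⟨?_, ?_⟩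
      · exact (Complex.continuous_ofReal.tendsto _).mono_left nhdsWithin_le_nhds
      · filter_upwards [self_mem_nhdsWithin] with v hv
        exact fun h => hv (Complex.ofReal_injective h)
    refine htend.frequently (Filter.Eventually.frequently ?_)
    have hev : ∀ᶠ v in nhds (s + 1), 0 < v ∧ s < v ^ 2 := by
      refine Filter.Eventually.and ?_ ?_
      · exact lt_mem_nhds (by linarith)
      · exact (continuous_pow 2).tendsto _ |>.eventually (lt_mem_nhds (by nlinarith))
    filter_upwards [nhdsWithin_le_nhds hev] with v hv
    rw [hFu, hGu v hv.1, laplace_besselFactor_of_lt ha hs hv.1 hv.2]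
  have hEq := AnalyticOnNhd.eqOn_of_preconnected_of_frequently_eq
    (hF.analyticOnNhd hopen) (hG.analyticOnNhd hopen)
    (convex_halfSpace_re_gt 0).isPreconnected (z₀ := ((s + 1 : ℝ) : ℂ))
    (by simp only [Set.mem_ofPred_eq, Complex.ofReal_re]; positivity) hfreq
  have h := hEq (show ((u : ℝ) : ℂ) ∈ {z : ℂ | 0 < z.re} by simpa using hu)
  rw [hFu, hGu u hu] at h
  exact_mod_cast h

/-! ### The lower bound -/

/-- For `n ≥ 3`, `n/3 < β < n/2` and `0 < u < 1`,
`∫₀^∞ e^{−ut} t^{n/2−β} J_{n/2−1}(t) dt ≥ (1/2)^{n/2−1} Γ(n−β) / (2^{(n−β)/2} Γ(n/2))`,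
and this lower bound is strictly positive. -/
theorem integral_exp_besselJ_lower_bound (n : ℕ) (hn : 3 ≤ n) (β u : ℝ)
    (hβ1 : (n : ℝ) / 3 < β) (hβ2 : β < (n : ℝ) / 2) (hu0 : 0 < u) (hu1 : u < 1) :
    (1 / 2 : ℝ) ^ ((n : ℝ) / 2 - 1) * Real.Gamma (n - β)
        / (2 ^ (((n : ℝ) - β) / 2) * Real.Gamma ((n : ℝ) / 2))
        ≤ ∫ t in Set.Ioi (0 : ℝ),
            Real.exp (-u * t) * t ^ ((n : ℝ) / 2 - β) * besselJ ((n : ℝ) / 2 - 1) t ∧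
      0 < (1 / 2 : ℝ) ^ ((n : ℝ) / 2 - 1) * Real.Gamma (n - β)
        / (2 ^ (((n : ℝ) - β) / 2) * Real.Gamma ((n : ℝ) / 2)) := by
  have hn3 : (3 : ℝ) ≤ n := by exact_mod_cast hn
  have hβ : 1 < β := by linarith
  have hΓa : 0 < Real.Gamma (n - β) := Real.Gamma_pos_of_pos (by linarith)
  have hΓn : 0 < Real.Gamma ((n : ℝ) / 2) := Real.Gamma_pos_of_pos (by linarith)
  refine ⟨?_, by positivity⟩
  obtain ⟨a, ha⟩ : ∃ a : ℝ, a = n - β := ⟨_, rfl⟩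
  obtain ⟨b, hb⟩ : ∃ b : ℝ, b = (β - 1) / 2 := ⟨_, rfl⟩
  have ha0 : 0 < a := by linarith
  have hb0 : 0 < b := by linarith
  have hΓb : 0 < Real.Gamma b := Real.Gamma_pos_of_pos hb0
  have hlam : -1 < (a - 1) / 2 := by linarith
  obtain ⟨M, hM⟩ := besselFactor_bounded (ν := (a - 1) / 2) (by linarith)
  have hw := beta_integrableOn (p := (a - 1) / 2 + 1) (q := b) (by linarith) hb0
  have hB := beta_integral (p := (a - 1) / 2 + 1) (q := b) (by linarith) hb0
  rw [show (a - 1) / 2 + 1 - 1 = (a - 1) / 2 by ring] at hw hB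
  rw [show (a - 1) / 2 + 1 + b = (n : ℝ) / 2 by rw [ha, hb]; ring,
    show (a - 1) / 2 + 1 = (a + 1) / 2 by ring] at hB
  -- `a - 1` is the total power of `t` in the integrand, and `(a - 1) / 2 + b = n / 2 - 1`, so
  -- Sonine's integral turns the single integral into the double integral of `k`.
  set k : ℝ → ℝ → ℝ := fun t s => t ^ (a - 1) * Real.exp (-(u * t)) *
    (s ^ ((a - 1) / 2) * (1 - s) ^ (b - 1)) * besselFactor ((a - 1) / 2) (s * (t ^ 2 / 4)) with hk
  have hkint : Integrable (Function.uncurry k)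
      ((volume.restrict (Set.Ioi (0 : ℝ))).prod (volume.restrict (Set.Ioo (0 : ℝ) 1))) := by
    refine ((gamma_integrableOn ha0 hu0).mul_prod hw).mul_bdd (c := M) ?_ ?_
    · exact ((measurable_besselFactor hlam).comp
        (show Measurable fun z : ℝ × ℝ => z.2 * (z.1 ^ 2 / 4) by fun_prop)).aestronglyMeasurable
    · rw [Measure.prod_restrict]
      filter_upwards [ae_restrict_mem (measurableSet_Ioi.prod measurableSet_Ioo)] with z hz
      have := hz.2.1
      exact hM _ (by positivity)
  have hlap : ∀ s ∈ Set.Ioo (0 : ℝ) 1, ∫ t in Set.Ioi (0 : ℝ), k t s =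
      s ^ ((a - 1) / 2) * (1 - s) ^ (b - 1) * (2 ^ (a - 1) / √Real.pi *
        ((1 / (u ^ 2 + s)) ^ (a / 2) * Real.Gamma (a / 2))) := by
    intro s hs
    rw [← laplace_besselFactor ha0 hs.1.le hu0, ← integral_const_mul]
    refine setIntegral_congr_fun measurableSet_Ioi fun t _ => ?_
    simp only [hk]
    ring
  have hI : ∫ t in Set.Ioi (0 : ℝ),
        Real.exp (-u * t) * t ^ ((n : ℝ) / 2 - β) * besselJ ((n : ℝ) / 2 - 1) t =
      (1 / 2 : ℝ) ^ ((n : ℝ) / 2 - 1) / Real.Gamma b *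
        ∫ s in Set.Ioo (0 : ℝ) 1, ∫ t in Set.Ioi (0 : ℝ), k t s := by
    rw [← integral_integral_swap hkint, ← integral_const_mul]
    refine setIntegral_congr_fun measurableSet_Ioi fun t ht => ?_
    have ht' : 0 < t := ht
    have hson := sonine (ν := (a - 1) / 2) (b := b) (x := t ^ 2 / 4) hlam hb0
    rw [show (a - 1) / 2 + b = (n : ℝ) / 2 - 1 by rw [ha, hb]; ring] at hson
    have hks : ∫ s in Set.Ioo (0 : ℝ) 1, k t s = t ^ (a - 1) * Real.exp (-(u * t)) *
        (Real.Gamma b * besselFactor ((n : ℝ) / 2 - 1) (t ^ 2 / 4)) := by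
      rw [← hson, ← integral_const_mul]
      refine setIntegral_congr_fun measurableSet_Ioo fun s _ => ?_
      simp only [hk]
      ring
    rw [hks, besselJ_eq ht', show t / 2 = (1 / 2) * t by ring,
      Real.mul_rpow (by norm_num) ht'.le,
      show a - 1 = ((n : ℝ) / 2 - β) + ((n : ℝ) / 2 - 1) by rw [ha]; ring, Real.rpow_add ht',
      neg_mul]
    field_simp
  have hlow : (Real.Gamma ((a + 1) / 2) * Real.Gamma b / Real.Gamma ((n : ℝ) / 2)) *
      (2 ^ (a - 1) / √Real.pi * ((1 / 2) ^ (a / 2) * Real.Gamma (a / 2))) ≤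
      ∫ s in Set.Ioo (0 : ℝ) 1, ∫ t in Set.Ioi (0 : ℝ), k t s := by
    rw [← hB, ← integral_mul_const]
    refine setIntegral_mono_on (hw.mul_const _) hkint.integral_prod_right measurableSet_Ioo ?_
    intro s hs
    have h1 : 0 ≤ s ^ ((a - 1) / 2) := Real.rpow_nonneg hs.1.le _
    have h2 : 0 ≤ (1 - s) ^ (b - 1) := Real.rpow_nonneg (by linarith [hs.2]) _
    have h3 : 0 < Real.Gamma (a / 2) := Real.Gamma_pos_of_pos (by positivity)
    have h4 : 0 < u ^ 2 + s := by have := hs.1; positivity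
    have h5 : u ^ 2 + s ≤ 2 := by nlinarith [hs.2]
    change _ ≤ ∫ t in Set.Ioi (0 : ℝ), k t s
    rw [hlap s hs]
    gcongr
  rw [hI, ← ha]
  refine le_trans (le_of_eq ?_)
    (mul_le_mul_of_nonneg_left hlow (by positivity))
  rw [← Gamma_duplication a, Real.div_rpow zero_le_one zero_le_two (a / 2), Real.one_rpow]
  field_simp
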